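/- (Theorem 2) A disjunctive state D is game valid if and only if D is winning: for every named model M there is some game state g_k in D such that I have a winning strategy in G(M, g_k), if and only if there exists a regulation function ρ such that I have a winning strategy for the disjunctive game DG(D, ρ). -/

import Mathlib

/-- Hybrid logic formulas over nominals `ℕ` and propositional variables `ℕ`
(the two sorts are kept disjoint by the constructors). -/
inductive Form : Type where
  | prop : ℕ → Form
  | nom : ℕ → Form
  | rel : ℕ → ℕ → Form
  | and : Form → Form → Form
  | or : Form → Form → Form
  | imp : Form → Form → Form
  | neg : Form → Form
  | at_ : ℕ → Form → Form
  | box : Form → Form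
  | dia : Form → Form

/-- A model for hybrid logic: a nonempty set of worlds, an accessibility
relation, a valuation and an assignment of nominals to worlds. -/
structure Model where
  W : Type
  ne : Nonempty W
  R : W → W → Prop
  V : ℕ → W → Prop
  g : ℕ → W

/-- Satisfaction of a formula at a world of a model. -/
def sat (M : Model) : M.W → Form → Prop
  | w, .prop p => M.V p w
  | w, .nom i => M.g i = w
  | _, .rel i j => M.R (M.g i) (M.g j)
  | w, .and φ ψ => sat M w φ ∧ sat M w ψ
  | w, .or φ ψ => sat M w φ ∨ sat M w ψ
  | w, .imp φ ψ => ¬ sat M w φ ∨ sat M w ψ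
  | w, .neg φ => ¬ sat M w φ
  | _, .at_ i φ => sat M (M.g i) φ
  | w, .box φ => ∀ v, M.R w v → sat M v φ
  | w, .dia φ => ∃ v, M.R w v ∧ sat M v φ

/-- A model is named iff every world has a name, i.e. the assignment is surjective. -/
def Model.Named (M : Model) : Prop := Function.Surjective M.g

/-- A formula is valid iff it is true at every world of every model. -/
def Valid (φ : Form) : Prop := ∀ (M : Model) (w : M.W), sat M w φ

/-- Roles: `pro` means I am the proponent (`P`), `opp` that I am the opponent (`O`). -/
inductive Role : Type where
  | pro : Role
  | opp : Role

/-- Role switch. -/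
def Role.swap : Role → Role
  | .pro => .opp
  | .opp => .pro

/-- Game states of the semantic game over a named model, with worlds referred to
by their names: `loc r i φ` is `Q, i : φ` and `glob r φ` is `Q : φ`. -/
inductive NState : Type where
  | loc : Role → ℕ → Form → NState
  | glob : Role → Form → NState

/-- Elementary formulas: `p`, `i`, `R(i,j)`. -/
def Form.elem : Form → Prop
  | .prop _ => True
  | .nom _ => True
  | .rel _ _ => True
  | _ => False

/-- Elementary game states: states `Q, i : φ` with `φ` elementary (these are the
leaves of the semantic game over named models). -/
def NState.elem : NState → Prop
  | .loc _ _ φ => φ.elem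
  | .glob _ _ => False

/-- States labelled "I" (where it is My choice); all other non-leaf states are labelled "Y". -/
def NState.myTurn : NState → Prop
  | .loc .pro _ (.or _ _) => True
  | .loc .pro _ (.imp _ _) => True
  | .loc .pro _ (.neg _) => True
  | .loc .pro _ (.at_ _ _) => True
  | .loc .pro _ (.dia _) => True
  | .loc .opp _ (.and _ _) => True
  | .loc .opp _ (.box _) => True
  | .glob .opp _ => True
  | _ => False

/-- The (model-independent) child relation of the semantic game over named models,
using the reformulated rules `(R_□)`, `(R_◇)` and `(R_U)`:
`NChild s t` says that `t` is a child of `s` in the game tree. -/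
inductive NChild : NState → NState → Prop where
  | orL (r i φ ψ) : NChild (.loc r i (.or φ ψ)) (.loc r i φ)
  | orR (r i φ ψ) : NChild (.loc r i (.or φ ψ)) (.loc r i ψ)
  | andL (r i φ ψ) : NChild (.loc r i (.and φ ψ)) (.loc r i φ)
  | andR (r i φ ψ) : NChild (.loc r i (.and φ ψ)) (.loc r i ψ)
  | impL (r i φ ψ) : NChild (.loc r i (.imp φ ψ)) (.loc r.swap i φ)
  | impR (r i φ ψ) : NChild (.loc r i (.imp φ ψ)) (.loc r i ψ)
  | neg (r i φ) : NChild (.loc r i (.neg φ)) (.loc r.swap i φ)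
  | at_ (r i j φ) : NChild (.loc r i (.at_ j φ)) (.loc r j φ)
  | box (r i φ) (j : ℕ) : NChild (.loc r i (.box φ)) (.loc r j (.or (.neg (.rel i j)) φ))
  | dia (r i φ) (j : ℕ) : NChild (.loc r i (.dia φ)) (.loc r j (.and (.rel i j) φ))
  | glob (r φ) (i : ℕ) : NChild (.glob r φ) (.loc r i φ)

/-- The label of an elementary leaf state in the game over the model `M`:
"I" iff the corresponding elementary claim is correct. -/
def elemIWin (M : Model) : NState → Prop
  | .loc .pro i φ => sat M (M.g i) φ
  | .loc .opp i φ => ¬ sat M (M.g i) φ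
  | .glob _ _ => False

/-- I have a winning strategy for the semantic game `G(M, s)` over a named model:
at "I"-nodes I keep one child, at "Y"-nodes all children, and all leaves are labelled "I". -/
inductive IWinsN (M : Model) : NState → Prop where
  | leaf {s} : s.elem → elemIWin M s → IWinsN M s
  | move {s t} : s.myTurn → NChild s t → IWinsN M t → IWinsN M s
  | resp {s} : ¬ s.myTurn → ¬ s.elem → (∀ t, NChild s t → IWinsN M t) → IWinsN M s

/-- You have a winning strategy for the semantic game `G(M, s)` over a named model:
at "Y"-nodes You keep one child, at "I"-nodes all children, and all leaves are labelled "Y". -/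
inductive YWinsN (M : Model) : NState → Prop where
  | leaf {s} : s.elem → ¬ elemIWin M s → YWinsN M s
  | move {s t} : ¬ s.myTurn → NChild s t → YWinsN M t → YWinsN M s
  | resp {s} : s.myTurn → (∀ t, NChild s t → YWinsN M t) → YWinsN M s

/-- A disjunctive state: a finite multiset of game states. -/
abbrev DState : Type := Multiset NState

/-- A disjunctive state is elementary iff all its game states are. -/
def DElem (D : DState) : Prop := ∀ s ∈ D, s.elem

/-- A regulation function maps every non-elementary disjunctive state to one of
its non-elementary game states. -/
def IsRegulation (ρ : DState → NState) : Prop :=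
  ∀ D : DState, ¬ DElem D → ρ D ∈ D ∧ ¬ (ρ D).elem

/-- `D` is game valid: for every named model `M` there is a member of `D` for
which I have a winning strategy in the semantic game over `M`. -/
def GameValid (D : DState) : Prop :=
  ∀ M : Model, M.Named → ∃ s ∈ D, IWinsN M s

/-- I have a winning strategy for the disjunctive game `DG(D, ρ)`.
At the state `g ⋁ D` with `ρ (g ⋁ D) = g`: if `g` is labelled "I", I either move in `g`
or duplicate `g`; if `g` is labelled "Y", You move in `g` and I must win after every move.
An elementary disjunctive state is a leaf labelled "I" (winning for Me) iff for every named
model some member of it is a leaf labelled "I" of the semantic game over that model.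
Since winning strategies are wellfounded trees, infinite plays are not winning for Me. -/
inductive DWins (ρ : DState → NState) : DState → Prop where
  | leaf {D : DState} : DElem D → (∀ M : Model, M.Named → ∃ s ∈ D, IWinsN M s) →
      DWins ρ D
  | movI {D : DState} {g g' : NState} : ρ (g ::ₘ D) = g → g.myTurn → NChild g g' →
      DWins ρ (g' ::ₘ D) → DWins ρ (g ::ₘ D)
  | dup {D : DState} {g : NState} : ρ (g ::ₘ D) = g → g.myTurn →
      DWins ρ (g ::ₘ g ::ₘ D) → DWins ρ (g ::ₘ D)
  | movY {D : DState} {g : NState} : ρ (g ::ₘ D) = g → ¬ g.myTurn → ¬ g.elem →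
      (∀ g', NChild g g' → DWins ρ (g' ::ₘ D)) → DWins ρ (g ::ₘ D)

/-- `D` is winning: there is a regulation `ρ` such that I have a winning strategy
for `DG(D, ρ)`. -/
def Winning (D : DState) : Prop :=
  ∃ ρ : DState → NState, IsRegulation ρ ∧ DWins ρ D

/-- `Form.occurs k φ`: the nominal `k` occurs in the formula `φ`. -/
def Form.occurs (k : ℕ) : Form → Prop
  | .prop _ => False
  | .nom i => i = k
  | .rel i j => i = k ∨ j = k
  | .and φ ψ => φ.occurs k ∨ ψ.occurs k
  | .or φ ψ => φ.occurs k ∨ ψ.occurs k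
  | .imp φ ψ => φ.occurs k ∨ ψ.occurs k
  | .neg φ => φ.occurs k
  | .at_ i φ => i = k ∨ φ.occurs k
  | .box φ => φ.occurs k
  | .dia φ => φ.occurs k

/-- A nominal occurs in a game state iff it occurs as its label or in its formula. -/
def NState.occurs (k : ℕ) : NState → Prop
  | .loc _ i φ => i = k ∨ φ.occurs k
  | .glob _ φ => φ.occurs k

/-- A nominal occurs in a disjunctive state iff it occurs in one of its game states. -/
def DOccurs (k : ℕ) (D : DState) : Prop := ∃ s ∈ D, s.occurs k

/-!
Soundness is an induction on My winning strategy. For completeness, fix a regulation that schedules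
Your states first and, among the remaining ones, consults the size of the disjunctive state so that
every game state is scheduled for infinitely many sizes. By duplicating, I can then bring any of My
states to the front as often as I like. Hence, if I do not win at `D`, the sets of game states met
along plays that I do not win form a consistency property: My states can be expanded to each child,
Your states to some child, and the elementary states are jointly refutable, since otherwise playing
the remaining states out arbitrarily would win. The union of a sufficiently generic ideal of such
sets contains the responses demanded by its members, and the reduced product, along the ideal, of
models refuting the elementary states of each set refutes all of them at once. The union is thus a
Hintikka set for a named model, in which I win from no member of `D`.
-/

open Filter

deriving instance Countable for Role, Form, NState

namespace NState

/-- The non-leaf states labelled "Y", where it is Your choice. -/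
def yourTurn (s : NState) : Prop := ¬ s.myTurn ∧ ¬ s.elem

theorem not_elem_of_myTurn {s : NState} (hs : s.myTurn) : ¬ s.elem := by
  rcases s with ⟨r, i, φ⟩ | ⟨r, φ⟩
  · cases r <;> cases φ <;> simp_all only [myTurn, elem, Form.elem, not_false_eq_true]
  · exact not_false

theorem exists_child {s : NState} (hs : ¬ s.elem) : ∃ t, NChild s t := by
  rcases s with ⟨r, i, φ⟩ | ⟨r, φ⟩
  · cases φ with
    | prop | nom | rel => exact absurd trivial hs
    | and => exact ⟨_, .andL ..⟩
    | or => exact ⟨_, .orL ..⟩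
    | imp => exact ⟨_, .impL ..⟩
    | neg => exact ⟨_, .neg ..⟩
    | at_ => exact ⟨_, .at_ ..⟩
    | box => exact ⟨_, .box _ _ _ 0⟩
    | dia => exact ⟨_, .dia _ _ _ 0⟩
  · exact ⟨_, .glob _ _ 0⟩

end NState

/-- A complexity measure on formulas. Modal operators count for three because the games replace
`□ φ` by `¬ R(i,j) ∨ φ` and `◇ φ` by `R(i,j) ∧ φ`. -/
def Form.weight : Form → ℕ
  | .prop _ | .nom _ | .rel _ _ => 0
  | .and φ ψ | .or φ ψ | .imp φ ψ => φ.weight + ψ.weight + 1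
  | .neg φ | .at_ _ φ => φ.weight + 1
  | .box φ | .dia φ => φ.weight + 3

/-- The complexity of a game state, for induction along the moves of the semantic game. The extra
one in the global case pays for the choice of a nominal. -/
def NState.weight : NState → ℕ
  | .loc _ _ φ => φ.weight
  | .glob _ φ => φ.weight + 1

theorem NChild.weight_lt {s t : NState} (h : NChild s t) : t.weight < s.weight := by
  cases h <;> simp only [NState.weight, Form.weight] <;> omega

theorem wellFounded_nChild : WellFounded fun t s : NState ↦ NChild s t :=
  Subrelation.wf NChild.weight_lt (measure NState.weight).wf

theorem DState.move_induction {motive : DState → Prop}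
    (move : ∀ D, (∀ g E t, D = g ::ₘ E → NChild g t → motive (t ::ₘ E)) → motive D) (D : DState) :
    motive D := by
  have : Std.Irrefl fun t s : NState ↦ NChild s t := ⟨fun _ h ↦ h.weight_lt.false⟩
  induction D using wellFounded_nChild.cutExpand.induction with
  | _ D ih =>
    refine move D fun g E t hD hgt ↦ ih _ ⟨{t}, g, ?_, ?_⟩
    · simpa only [Multiset.mem_singleton, forall_eq] using hgt
    · rw [hD, ← Multiset.singleton_add g, ← Multiset.singleton_add t]
      abel

theorem gameValid_of_dWins {ρ : DState → NState} {D : DState} (h : DWins ρ D) : GameValid D := by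
  simp only [GameValid]
  induction h with
  | leaf _ hD => exact hD
  | movI _ hg hgt _ ih =>
    simp only [Multiset.mem_cons, exists_eq_or_imp] at ih ⊢
    exact fun M hM ↦ (ih M hM).imp_left (.move hg hgt)
  | dup _ _ _ ih =>
    simp only [Multiset.mem_cons, exists_eq_or_imp] at ih ⊢
    exact fun M hM ↦ (ih M hM).elim .inl id
  | @movY D g _ hg hne _ ih =>
    simp only [Multiset.mem_cons, exists_eq_or_imp] at ih ⊢
    intro M hM
    by_cases hD : ∃ s ∈ D, IWinsN M s
    · exact .inr hD
    · exact .inl (.resp hg hne fun t hgt ↦ (ih t hgt M hM).resolve_right hD)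

section ReducedProduct

variable {ι : Type*}

/-- Equality of the denotations of two nominals `F`-almost everywhere. -/
def nominalSetoid (F : Filter ι) (M : ι → Model) : Setoid ℕ where
  r i j := ∀ᶠ p in F, (M p).g i = (M p).g j
  iseqv :=
    { refl _ := .of_forall fun _ ↦ rfl
      symm h := h.mono fun _ ↦ Eq.symm
      trans h₁ h₂ := (h₁.and h₂).mono fun _ h ↦ h.1.trans h.2 }

/-- The named part of the reduced product of the models `M p` modulo the filter `F`: its worlds are
the nominals, identified when they agree `F`-almost everywhere. -/
def reducedProduct (F : Filter ι) (M : ι → Model) : Model where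
  W := Quotient (nominalSetoid F M)
  ne := ⟨Quotient.mk _ 0⟩
  R := Quotient.lift₂ (fun i j ↦ ∀ᶠ p in F, (M p).R ((M p).g i) ((M p).g j))
    fun _ _ _ _ h₁ h₂ ↦ propext <| eventually_congr <|
      (h₁.and h₂).mono fun _ h ↦ by rw [h.1, h.2]
  V q := Quotient.lift (fun i ↦ ∀ᶠ p in F, (M p).V q ((M p).g i))
    fun _ _ h ↦ propext <| eventually_congr <| h.mono fun _ h ↦ by rw [h]
  g := Quotient.mk _

variable {F : Filter ι} {M : ι → Model}

theorem reducedProduct_named : (reducedProduct F M).Named := Quotient.mk_surjective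

theorem sat_reducedProduct_iff {φ : Form} (hφ : φ.elem) (i : ℕ) :
    sat (reducedProduct F M) ((reducedProduct F M).g i) φ ↔
      ∀ᶠ p in F, sat (M p) ((M p).g i) φ := by
  cases φ with
  | prop | rel => exact Iff.rfl
  | nom => exact Quotient.eq
  | _ => exact hφ.elim

theorem not_elemIWin_reducedProduct [F.NeBot] {s : NState} (hs : s.elem)
    (h : ∀ᶠ p in F, ¬ elemIWin (M p) s) : ¬ elemIWin (reducedProduct F M) s := by
  rcases s with ⟨_ | _, i, φ⟩ | _
  · exact fun hsat ↦ (((sat_reducedProduct_iff hs i).1 hsat).and h).exists.elim fun _ hp ↦ hp.2 hp.1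
  · exact not_not_intro <| (sat_reducedProduct_iff hs i).2 <| h.mono fun _ ↦ not_not.1
  · exact not_false

end ReducedProduct

/-- A Hintikka set for `M`: it contains no elementary state won by Me, and it contains, along with
each of My states, all of its children and, along with each of Your states, one of its children.
Such a set describes a strategy by which I do not win from any of its members. -/
structure IsHintikka (M : Model) (H : Set NState) : Prop where
  not_elemIWin : ∀ s ∈ H, s.elem → ¬ elemIWin M s
  child_mem : ∀ s ∈ H, s.myTurn → ∀ t, NChild s t → t ∈ H
  exists_child_mem : ∀ s ∈ H, s.yourTurn → ∃ t ∈ H, NChild s t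

theorem IsHintikka.not_iWinsN {M : Model} {H : Set NState} (hH : IsHintikka M H) {s : NState}
    (hs : s ∈ H) : ¬ IWinsN M s := by
  intro hwin
  induction hwin with
  | leaf helem hwin => exact hH.not_elemIWin _ hs helem hwin
  | move hmy hst _ ih => exact ih (hH.child_mem _ hs hmy _ hst)
  | resp hmy helem _ ih =>
    obtain ⟨t, ht, hst⟩ := hH.exists_child_mem _ hs ⟨hmy, helem⟩
    exact ih t hst ht

theorem exists_generic_ideal {P ι : Type*} [Preorder P] [Countable ι] {A B : ι → Set P}
    (hA : ∀ i, IsUpperSet (A i)) (hAB : ∀ i, ∀ p ∈ A i, ∃ q ∈ B i, p ≤ q) (p₀ : P) :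
    ∃ I : Order.Ideal P, p₀ ∈ I ∧ ∀ i, ∀ p ∈ I, p ∈ A i → ∃ q ∈ I, q ∈ B i := by
  have := Encodable.ofCountable ι
  let 𝒟 (i : ι) : Order.Cofinal P :=
    { carrier := {p | p ∈ B i ∨ ∀ q ∈ A i, ¬ p ≤ q}
      isCofinal p := by
        by_cases h : ∃ q ∈ A i, p ≤ q
        · obtain ⟨q, hq, hpq⟩ := h
          obtain ⟨r, hr, hqr⟩ := hAB i q hq
          exact ⟨r, .inl hr, hpq.trans hqr⟩
        · exact ⟨p, .inr fun q hq hpq ↦ h ⟨q, hq, hpq⟩, le_rfl⟩ }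
  refine ⟨Order.idealOfCofinals p₀ 𝒟, Order.mem_idealOfCofinals p₀ 𝒟, fun i p hpI hp ↦ ?_⟩
  obtain ⟨q, hq, hqI⟩ := Order.cofinal_meets_idealOfCofinals p₀ 𝒟 i
  obtain ⟨r, -, hpr, hqr⟩ := (Order.idealOfCofinals p₀ 𝒟).directed p hpI q hqI
  exact ⟨q, hqI, hq.resolve_right fun h ↦ h r (hA i hpr hp) hqr⟩

/-- A consistency property in the sense of Smullyan, with game states in place of signed formulas: a
family of sets of states, each with jointly refutable elementary members, that can be enlarged
within the family towards a Hintikka set. -/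
structure IsConsistencyProperty (𝒞 : Set (Set NState)) : Prop where
  exists_model : ∀ H ∈ 𝒞, ∃ M : Model, ∀ s ∈ H, s.elem → ¬ elemIWin M s
  child : ∀ H ∈ 𝒞, ∀ s ∈ H, s.myTurn → ∀ t, NChild s t → ∃ H' ∈ 𝒞, H ⊆ H' ∧ t ∈ H'
  exists_child : ∀ H ∈ 𝒞, ∀ s ∈ H, s.yourTurn → ∃ H' ∈ 𝒞, H ⊆ H' ∧ ∃ t ∈ H', NChild s t

namespace IsConsistencyProperty

variable {𝒞 : Set (Set NState)}

theorem exists_saturated_ideal (h𝒞 : IsConsistencyProperty 𝒞) (H₀ : 𝒞) :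
    ∃ I : Order.Ideal 𝒞, H₀ ∈ I ∧
      (∀ H ∈ I, ∀ s ∈ H.1, s.myTurn → ∀ t, NChild s t → ∃ H' ∈ I, t ∈ H'.1) ∧
      ∀ H ∈ I, ∀ s ∈ H.1, s.yourTurn → ∃ H' ∈ I, ∃ t ∈ H'.1, NChild s t := by
  let A : (NState × NState) ⊕ NState → Set 𝒞 :=
    Sum.elim (fun st ↦ {H | st.1 ∈ H.1 ∧ st.1.myTurn ∧ NChild st.1 st.2})
      fun s ↦ {H | s ∈ H.1 ∧ s.yourTurn}
  let B : (NState × NState) ⊕ NState → Set 𝒞 :=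
    Sum.elim (fun st ↦ {H | st.2 ∈ H.1}) fun s ↦ {H | ∃ t ∈ H.1, NChild s t}
  have hA : ∀ i, IsUpperSet (A i) := by
    rintro (st | s) H H' hHH' hs
    exacts [hs.imp_left (@hHH' _), hs.imp_left (@hHH' _)]
  have hAB : ∀ i, ∀ H ∈ A i, ∃ H' ∈ B i, H ≤ H' := by
    rintro (⟨s, t⟩ | s) ⟨H, hH⟩ hs
    · obtain ⟨H', hH', hle, ht⟩ := h𝒞.child H hH s hs.1 hs.2.1 t hs.2.2
      exact ⟨⟨H', hH'⟩, ht, hle⟩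
    · obtain ⟨H', hH', hle, ht⟩ := h𝒞.exists_child H hH s hs.1 hs.2
      exact ⟨⟨H', hH'⟩, ht, hle⟩
  obtain ⟨I, hI, hgen⟩ := exists_generic_ideal hA hAB H₀
  exact ⟨I, hI, fun H hHI s hs hmy t hst ↦ hgen (.inl (s, t)) H hHI ⟨hs, hmy, hst⟩,
    fun H hHI s hs hyour ↦ hgen (.inr s) H hHI ⟨hs, hyour⟩⟩

theorem exists_named_isHintikka (h𝒞 : IsConsistencyProperty 𝒞) {H₀ : Set NState}
    (hH₀ : H₀ ∈ 𝒞) : ∃ N : Model, N.Named ∧ ∃ H, H₀ ⊆ H ∧ IsHintikka N H := by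
  obtain ⟨I, hI, hchild, hexists⟩ := h𝒞.exists_saturated_ideal ⟨H₀, hH₀⟩
  choose M hM using fun H : I ↦ h𝒞.exists_model H.1.1 H.1.2
  have : Nonempty I := ⟨⟨_, hI⟩⟩
  have : IsDirectedOrder I := I.directed.isDirectedOrder
  refine ⟨reducedProduct atTop M, reducedProduct_named, {s | ∃ H ∈ I, s ∈ H.1},
    fun s hs ↦ ⟨_, hI, hs⟩, ?_, ?_, ?_⟩
  · rintro s ⟨H, hHI, hs⟩ helem
    refine not_elemIWin_reducedProduct helem ?_
    filter_upwards [eventually_ge_atTop (⟨H, hHI⟩ : I)] with H' hHH'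
    exact hM H' s (hHH' hs) helem
  · rintro s ⟨H, hHI, hs⟩ hmy t hst
    exact hchild H hHI s hs hmy t hst
  · rintro s ⟨H, hHI, hs⟩ hyour
    obtain ⟨H', hH'I, t, ht, hst⟩ := hexists H hHI s hs hyour
    exact ⟨t, ⟨H', hH'I, ht⟩, hst⟩

end IsConsistencyProperty

theorem IsRegulation.exists_eq_cons {ρ : DState → NState} (hρ : IsRegulation ρ) {D : DState}
    (hD : ¬ DElem D) : ∃ g E, D = g ::ₘ E ∧ ρ (g ::ₘ E) = g ∧ ¬ g.elem := by
  obtain ⟨hmem, hne⟩ := hρ D hD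
  obtain ⟨E, hE⟩ := Multiset.exists_cons_of_mem hmem
  exact ⟨ρ D, E, hE, by rw [← hE], hne⟩

theorem IsRegulation.dWins_of_elem_win {ρ : DState → NState} (hρ : IsRegulation ρ) {D : DState}
    (hD : ∀ M : Model, M.Named → ∃ s ∈ D, s.elem ∧ elemIWin M s) : DWins ρ D := by
  induction D using DState.move_induction with
  | move D ih =>
    by_cases helem : DElem D
    · refine .leaf helem fun M hM ↦ ?_
      obtain ⟨s, hs, hse, hwin⟩ := hD M hM
      exact ⟨s, hs, .leaf hse hwin⟩
    obtain ⟨g, E, rfl, hg, hne⟩ := hρ.exists_eq_cons helem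
    have hmove (t : NState) (hgt : NChild g t) : DWins ρ (t ::ₘ E) := by
      refine ih g E t rfl hgt fun M hM ↦ ?_
      obtain ⟨s, hs, hse, hwin⟩ := hD M hM
      have hsE : s ∈ E := (Multiset.mem_cons.1 hs).resolve_left fun h ↦ hne (h ▸ hse)
      exact ⟨s, Multiset.mem_cons_of_mem hsE, hse, hwin⟩
    by_cases hmy : g.myTurn
    · obtain ⟨t, hgt⟩ := NState.exists_child hne
      exact .movI hg hmy hgt (hmove t hgt)
    · exact .movY hg hmy hne hmove

/-- A disjunctive state is settled if none of its game states awaits a choice of Yours. -/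
def Settled (D : DState) : Prop := ∀ s ∈ D, ¬ s.yourTurn

theorem IsRegulation.exists_card_eq {ρ : DState → NState} (hρ : IsRegulation ρ) {D : DState}
    (hD : ¬ DWins ρ D) (hset : Settled D) (hne : ¬ DElem D) {n : ℕ} (hn : D.card ≤ n) :
    ∃ D', ¬ DWins ρ D' ∧ D ≤ D' ∧ D' ⊆ D ∧ D'.card = n := by
  induction n, hn using Nat.le_induction with
  | base => exact ⟨D, hD, le_rfl, Multiset.Subset.refl D, rfl⟩
  | succ n _ ih =>
    obtain ⟨D', hD', hle, hsub, rfl⟩ := ih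
    have hne' : ¬ DElem D' := fun helem ↦ hne fun s hs ↦ helem s (Multiset.mem_of_le hle hs)
    obtain ⟨g, E, rfl, hg, hge⟩ := hρ.exists_eq_cons hne'
    have hgD : g ∈ D := hsub (Multiset.mem_cons_self g E)
    have hmy : g.myTurn := by_contra fun hmy ↦ hset g hgD ⟨hmy, hge⟩
    exact ⟨g ::ₘ g ::ₘ E, mt (.dup hg hmy) hD', hle.trans (Multiset.le_cons_self _ g),
      Multiset.cons_subset.2 ⟨hgD, hsub⟩, Multiset.card_cons _ _⟩

/-- A regulation is fair if it schedules Your states first and schedules each other non-elementary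
state at infinitely many sizes of the disjunctive state. -/
structure IsFair (ρ : DState → NState) : Prop where
  isRegulation : IsRegulation ρ
  yourTurn : ∀ D, ¬ Settled D → (ρ D).yourTurn
  frequently : ∀ g : NState, ¬ g.elem →
    ∃ᶠ n in atTop, ∀ D : DState, D.card = n → Settled D → g ∈ D → ρ D = g

theorem exists_frequently_eq (α : Type*) [Countable α] [Nonempty α] :
    ∃ e : ℕ → α, ∀ a, ∃ᶠ n in atTop, e n = a := by
  obtain ⟨f, hf⟩ := exists_surjective_nat α
  refine ⟨fun n ↦ f n.unpair.1, fun a ↦ frequently_atTop.2 fun m ↦ ?_⟩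
  obtain ⟨k, rfl⟩ := hf a
  exact ⟨Nat.pair k m, Nat.right_le_pair k m, by simp only [Nat.unpair_pair]⟩

theorem exists_isFair : ∃ ρ, IsFair ρ := by
  have : Nonempty NState := ⟨.glob .pro (.prop 0)⟩
  obtain ⟨e, he⟩ := exists_frequently_eq NState
  have hchoice (D : DState) : ∃ g : NState, (¬ DElem D → g ∈ D ∧ ¬ g.elem) ∧
      (¬ Settled D → g.yourTurn) ∧
      (Settled D → e D.card ∈ D → ¬ (e D.card).elem → g = e D.card) := by
    by_cases hset : Settled D
    · by_cases hcode : e D.card ∈ D ∧ ¬ (e D.card).elem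
      · exact ⟨e D.card, fun _ ↦ hcode, absurd hset, fun _ _ _ ↦ rfl⟩
      by_cases helem : DElem D
      · exact ⟨e 0, absurd helem, absurd hset, fun _ hmem hne ↦ absurd ⟨hmem, hne⟩ hcode⟩
      · obtain ⟨g, hg, hne⟩ : ∃ g ∈ D, ¬ g.elem := by
          simpa only [DElem, not_forall, exists_prop] using helem
        exact ⟨g, fun _ ↦ ⟨hg, hne⟩, absurd hset, fun _ hmem hne ↦ absurd ⟨hmem, hne⟩ hcode⟩
    · obtain ⟨g, hg, hyour⟩ : ∃ g ∈ D, g.yourTurn := by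
        simpa only [Settled, not_forall, not_not, exists_prop] using hset
      exact ⟨g, fun _ ↦ ⟨hg, hyour.2⟩, fun _ ↦ hyour, fun h ↦ absurd h hset⟩
  choose ρ hreg hyour hcode using hchoice
  refine ⟨ρ, hreg, hyour, fun g hne ↦ (he g).mono ?_⟩
  rintro _ rfl D rfl hset hmem
  exact hcode D hset hmem hne

/-- `Tracks D H` says that the history `H` of game states met in a play that reached `D` has been
dealt with: whatever is no longer in `D` was a state of Yours that You answered. -/
def Tracks (D : DState) (H : Set NState) : Prop :=
  ∀ s ∈ H, s ∈ D ∨ s.yourTurn ∧ ∃ t ∈ H, NChild s t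

namespace Tracks

variable {D E : DState} {H : Set NState}

theorem mono (h : Tracks D H) (hDE : D ⊆ E) : Tracks E H := fun s hs ↦ (h s hs).imp_left (@hDE s)

theorem insert_of_mem {t : NState} (h : Tracks D H) (ht : t ∈ D) : Tracks D (insert t H) := by
  rintro s (rfl | hs)
  · exact .inl ht
  · exact (h s hs).imp_right <| .imp_right fun ⟨u, hu, hsu⟩ ↦ ⟨u, .inr hu, hsu⟩

theorem insert_answer {g t : NState} (h : Tracks (g ::ₘ E) H) (hg : g.yourTurn) (hgt : NChild g t) :
    Tracks (t ::ₘ E) (insert t H) := by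
  rintro s (rfl | hs)
  · exact .inl (Multiset.mem_cons_self _ _)
  rcases h s hs with hsD | ⟨hyour, u, hu, hsu⟩
  · rcases Multiset.mem_cons.1 hsD with rfl | hsE
    · exact .inr ⟨hg, t, .inl rfl, hgt⟩
    · exact .inl (Multiset.mem_cons_of_mem hsE)
  · exact .inr ⟨hyour, u, .inr hu, hsu⟩

end Tracks

namespace IsFair

variable {ρ : DState → NState} (hρ : IsFair ρ) {D : DState} {H : Set NState} {g : NState}
include hρ

theorem exists_settled (hD : ¬ DWins ρ D) (hDH : Tracks D H) :
    ∃ D' H', ¬ DWins ρ D' ∧ Settled D' ∧ Tracks D' H' ∧ H ⊆ H' := by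
  induction D using DState.move_induction generalizing H with
  | move D ih =>
    by_cases hset : Settled D
    · exact ⟨D, H, hD, hset, hDH, subset_rfl⟩
    have hne : ¬ DElem D := fun helem ↦ hset fun s hs hyour ↦ hyour.2 (helem s hs)
    obtain ⟨g, E, rfl, hg, -⟩ := hρ.isRegulation.exists_eq_cons hne
    have hyour : g.yourTurn := hg ▸ hρ.yourTurn _ hset
    obtain ⟨t, hgt, ht⟩ : ∃ t, NChild g t ∧ ¬ DWins ρ (t ::ₘ E) := by
      by_contra! hwin
      exact hD (.movY hg hyour.1 hyour.2 hwin)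
    obtain ⟨D', H', hD', hset', hDH', hHH'⟩ := ih g E t rfl hgt ht (hDH.insert_answer hyour hgt)
    exact ⟨D', H', hD', hset', hDH', (Set.subset_insert t H).trans hHH'⟩

theorem exists_scheduled (hD : ¬ DWins ρ D) (hset : Settled D) (hmem : g ∈ D) (hne : ¬ g.elem) :
    ∃ E, ¬ DWins ρ (g ::ₘ E) ∧ D ≤ g ::ₘ E ∧ g ::ₘ E ⊆ D ∧ ρ (g ::ₘ E) = g := by
  obtain ⟨n, hn, hsched⟩ := frequently_atTop.1 (hρ.frequently g hne) D.card
  obtain ⟨D', hD', hle, hsub, hcard⟩ :=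
    hρ.isRegulation.exists_card_eq hD hset (fun helem ↦ hne (helem g hmem)) hn
  have hmem' : g ∈ D' := Multiset.mem_of_le hle hmem
  obtain ⟨E, rfl⟩ := Multiset.exists_cons_of_mem hmem'
  exact ⟨E, hD', hle, hsub, hsched _ hcard (fun s hs ↦ hset s (hsub hs)) hmem'⟩

theorem exists_superset_child (hD : ¬ DWins ρ D) (hset : Settled D) (hmem : g ∈ D)
    (hmy : g.myTurn) {t : NState} (ht : NChild g t) : ∃ E, ¬ DWins ρ (t ::ₘ E) ∧ D ⊆ E := by
  have hne := NState.not_elem_of_myTurn hmy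
  obtain ⟨E₁, hE₁, hle₁, hsub₁, hsched₁⟩ := hρ.exists_scheduled hD hset hmem hne
  -- I duplicate `g` before moving in it, so that a copy survives for the other children of `g`.
  have hdup : ¬ DWins ρ (g ::ₘ g ::ₘ E₁) := mt (.dup hsched₁ hmy) hE₁
  have hset₁ : Settled (g ::ₘ g ::ₘ E₁) := fun s hs ↦
    hset s (Multiset.cons_subset.2 ⟨hmem, hsub₁⟩ hs)
  obtain ⟨E₂, hE₂, hle₂, -, hsched₂⟩ :=
    hρ.exists_scheduled hdup hset₁ (Multiset.mem_cons_self _ _) hne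
  exact ⟨E₂, mt (.movI hsched₂ hmy ht) hE₂,
    Multiset.subset_of_le (hle₁.trans ((Multiset.cons_le_cons_iff g).1 hle₂))⟩

theorem isConsistencyProperty :
    IsConsistencyProperty {H | ∃ D, ¬ DWins ρ D ∧ Tracks D H} where
  exists_model := by
    rintro H ⟨D, hD, hDH⟩
    by_contra! hwin
    refine hD (hρ.isRegulation.dWins_of_elem_win fun M _ ↦ ?_)
    obtain ⟨s, hs, helem, hsM⟩ := hwin M
    exact ⟨s, (hDH s hs).resolve_right fun h ↦ h.1.2 helem, helem, hsM⟩
  child := by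
    rintro H ⟨D, hD, hDH⟩ s hs hmy t hst
    obtain ⟨D', H', hD', hset, hDH', hHH'⟩ := hρ.exists_settled hD hDH
    have hsD' : s ∈ D' := (hDH' s (hHH' hs)).resolve_right fun h ↦ h.1.1 hmy
    obtain ⟨E, hE, hDE⟩ := hρ.exists_superset_child hD' hset hsD' hmy hst
    have htE : Tracks (t ::ₘ E) (insert t H') :=
      (hDH'.mono fun _ hu ↦ Multiset.mem_cons_of_mem (hDE hu)).insert_of_mem
        (Multiset.mem_cons_self t E)
    exact ⟨insert t H', ⟨t ::ₘ E, hE, htE⟩, hHH'.trans (Set.subset_insert t H'), .inl rfl⟩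
  exists_child := by
    rintro H ⟨D, hD, hDH⟩ s hs hyour
    obtain ⟨D', H', hD', hset, hDH', hHH'⟩ := hρ.exists_settled hD hDH
    have hanswer := (hDH' s (hHH' hs)).resolve_left fun hsD' ↦ hset s hsD' hyour
    exact ⟨H', ⟨D', hD', hDH'⟩, hHH', hanswer.2⟩

theorem dWins_of_gameValid (hD : GameValid D) : DWins ρ D := by
  by_contra hlose
  have hmem : {s | s ∈ D} ∈ {H | ∃ D, ¬ DWins ρ D ∧ Tracks D H} := ⟨D, hlose, fun _ ↦ .inl⟩
  obtain ⟨N, hN, H, hDH, hH⟩ := hρ.isConsistencyProperty.exists_named_isHintikka hmem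
  obtain ⟨s, hs, hwin⟩ := hD N hN
  exact hH.not_iWinsN (hDH hs) hwin

end IsFair

/-- (Theorem 2) A disjunctive state is game valid iff it is winning. -/
theorem gameValid_iff_winning (D : DState) : GameValid D ↔ Winning D := by
  constructor
  · intro hD
    obtain ⟨ρ, hρ⟩ := exists_isFair
    exact ⟨ρ, hρ.isRegulation, hρ.dWins_of_gameValid hD⟩
  · rintro ⟨ρ, -, hwin⟩
    exact gameValid_of_dWins hwin
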